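/- Let α ∈ (0,2], 0 < β < min(d, α), and let G_α(t,x,y) be the heat kernel on ℝ^d with Fourier transform F[G_α(t,x,·)](ξ) = e^{i⟨x,ξ⟩ − t|ξ|^α/2}. Then for all x ∈ ℝ^d and 0 ≤ s ≤ t, c_{d,β} ∫₀^s ∫_{ℝ^d} |ξ|^{−(d−β)} e^{−(t−u)|ξ|^α/2} e^{−(s−u)|ξ|^α/2} dξ du = c_{d,β,α} ((t+s)^{1−β/α} − (t−s)^{1−β/α}), where c_{d,β,α} = c_{d,β} ∫_{ℝ^d} |ξ|^{−(d−β)−α}(1 − e^{−|ξ|^α/2}) dξ. -/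

import Mathlib

open Real MeasureTheory

lemma aux_radial (d : ℕ) (hd : 1 ≤ d) (f : ℝ → ℝ) :
    ∫ ξ : EuclideanSpace ℝ (Fin d), f ‖ξ‖ =
      ((d : ℝ) * (volume : Measure (EuclideanSpace ℝ (Fin d))).real (Metric.ball 0 1)) *
        ∫ y in Set.Ioi (0:ℝ), y ^ ((d : ℝ) - 1) * f y := by
  have : Nonempty (Fin d) := ⟨⟨0, hd⟩⟩
  rw [integral_fun_norm_addHaar]
  simp only [finrank_euclideanSpace, Fintype.card_fin, nsmul_eq_mul, smul_eq_mul]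
  rw [mul_assoc]
  congr 2
  refine setIntegral_congr_fun measurableSet_Ioi (fun y hy => ?_)
  have : (d : ℝ) - 1 = ((d - 1 : ℕ) : ℝ) := by push_cast [hd]; ring
  simp only [this, rpow_natCast]

lemma aux_bound (α y : ℝ) : 1 - Real.exp (-y ^ α / 2) ≤ y ^ α / 2 := by
  have := Real.add_one_le_exp (-y ^ α / 2)
  linarith

lemma aux_nonneg (α y : ℝ) (hy : 0 < y) : 0 ≤ 1 - Real.exp (-y ^ α / 2) := by
  have : Real.exp (-y ^ α / 2) ≤ 1 := by
    rw [Real.exp_le_one_iff]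
    have := rpow_pos_of_pos hy α
    linarith
  linarith

lemma aux_parts (α β : ℝ) (hα0 : 0 < α) (hβ0 : 0 < β) (hβα : β < α) :
    ∫ y in Set.Ioi (0:ℝ), (1 - Real.exp (-y ^ α / 2)) * y ^ (β - α - 1) =
      α / (2 * (α - β)) * ((1/2 : ℝ) ^ (-β / α) * (1 / α) * Gamma (β / α)) := by
  have hne : β - α ≠ 0 := by linarith
  have hmeas : Measurable (fun y : ℝ => (1 - Real.exp (-y ^ α / 2)) * y ^ (β - α - 1)) := by
    fun_prop
  have hint : IntegrableOn (fun y : ℝ => (1 - Real.exp (-y ^ α / 2)) * y ^ (β - α - 1))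
      (Set.Ioi 0) := by
    rw [← Set.Ioc_union_Ioi_eq_Ioi (zero_le_one' ℝ)]
    refine IntegrableOn.union ?_ ?_
    · rw [integrableOn_Ioc_iff_integrableOn_Ioo]
      refine Integrable.mono' (g := fun y : ℝ => y ^ (β - 1)) ?_ hmeas.aestronglyMeasurable ?_
      · exact (intervalIntegral.integrableOn_Ioo_rpow_iff zero_lt_one).2 (by linarith)
      · filter_upwards [ae_restrict_mem measurableSet_Ioo] with y hy
        have h0 := aux_nonneg α y hy.1
        have hp := rpow_pos_of_pos hy.1 (β - α - 1)
        have hpa := rpow_pos_of_pos hy.1 α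
        rw [Real.norm_of_nonneg (mul_nonneg h0 hp.le),
          show β - 1 = α + (β - α - 1) by ring, rpow_add hy.1]
        exact mul_le_mul_of_nonneg_right ((aux_bound α y).trans (by linarith)) hp.le
    · refine Integrable.mono' (g := fun y : ℝ => y ^ (β - α - 1)) ?_ hmeas.aestronglyMeasurable ?_
      · exact integrableOn_Ioi_rpow_of_lt (by linarith) zero_lt_one
      · filter_upwards [ae_restrict_mem measurableSet_Ioi] with y hy
        have hy0 : (0:ℝ) < y := lt_trans zero_lt_one hy
        have h0 := aux_nonneg α y hy0
        have hp := rpow_pos_of_pos hy0 (β - α - 1)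
        rw [Real.norm_of_nonneg (mul_nonneg h0 hp.le)]
        have := Real.exp_pos (-y ^ α / 2)
        exact mul_le_of_le_one_left hp.le (by linarith)
  have hkey : ∀ y ∈ Set.Ioi (0:ℝ),
      (Real.exp (-y ^ α / 2) * (α * y ^ (α - 1) / 2)) * (y ^ (β - α) / (β - α)) =
      α / (2 * (β - α)) * (y ^ (β - 1) * Real.exp (-(1/2) * y ^ α)) := by
    intro y hy
    rw [show β - 1 = (α - 1) + (β - α) by ring, rpow_add hy,
      show -(1/2) * y ^ α = -y ^ α / 2 by ring]
    field_simp
  have hint2 : IntegrableOn ((fun y : ℝ => Real.exp (-y ^ α / 2) * (α * y ^ (α - 1) / 2)) *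
      (fun y : ℝ => y ^ (β - α) / (β - α))) (Set.Ioi 0) := by
    refine IntegrableOn.congr_fun ?_ (fun y hy => (hkey y hy).symm) measurableSet_Ioi
    exact (integrableOn_rpow_mul_exp_neg_mul_rpow (by linarith) hα0 (by norm_num)).const_mul _
  have h := integral_Ioi_mul_deriv_eq_deriv_mul (a := (0:ℝ)) (a' := 0) (b' := 0)
    (u := fun y : ℝ => 1 - Real.exp (-y ^ α / 2))
    (v := fun y : ℝ => y ^ (β - α) / (β - α))
    (u' := fun y : ℝ => Real.exp (-y ^ α / 2) * (α * y ^ (α - 1) / 2))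
    (v' := fun y : ℝ => y ^ (β - α - 1)) ?_ ?_ hint hint2 ?_ ?_
  · rw [h, setIntegral_congr_fun measurableSet_Ioi hkey, integral_const_mul,
      integral_rpow_mul_exp_neg_mul_rpow hα0 (by linarith) (by norm_num)]
    have : α - β ≠ 0 := by linarith
    rw [show β - 1 + 1 = β by ring, show (β - α) = -(α - β) by ring]
    field_simp
    ring
  · intro y hy
    have h1 := (Real.hasDerivAt_rpow_const (x := y) (p := α) (Or.inl (ne_of_gt hy)))
    have h2 : HasDerivAt (fun y : ℝ => -y ^ α / 2) (-(α * y ^ (α - 1)) / 2) y :=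
      h1.neg.div_const 2
    have h3 := (h2.exp).const_sub 1
    have h4 : -(Real.exp (-y ^ α / 2) * (-(α * y ^ (α - 1)) / 2)) =
        Real.exp (-y ^ α / 2) * (α * y ^ (α - 1) / 2) := by ring
    rw [h4] at h3
    exact h3
  · intro y hy
    have h1 := (Real.hasDerivAt_rpow_const (x := y) (p := β - α) (Or.inl (ne_of_gt hy)))
    convert h1.div_const (β - α) using 1
    field_simp
  · have hlim : Filter.Tendsto (fun y : ℝ => y ^ β / (α - β)) (nhdsWithin 0 (Set.Ioi 0)) (nhds 0) := by
      have := ((Real.continuousAt_rpow_const 0 β (Or.inr hβ0.le)).tendsto.mono_left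
        (nhdsWithin_le_nhds (s := Set.Ioi 0))).div_const (α - β)
      simpa [zero_rpow hβ0.ne'] using this
    refine squeeze_zero_norm' ?_ hlim
    filter_upwards [self_mem_nhdsWithin] with y hy
    have hy : 0 < y := hy
    have h0 := aux_nonneg α y hy
    have hp := rpow_pos_of_pos hy (β - α)
    have hpa := rpow_pos_of_pos hy α
    have hd : 0 < α - β := by linarith
    simp only [Pi.mul_apply, norm_mul, norm_div, Real.norm_of_nonneg h0, Real.norm_of_nonneg hp.le]
    rw [show β - α = -(α - β) by ring, norm_neg, Real.norm_of_nonneg hd.le, ← mul_div_assoc,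
      show -(α - β) = β - α by ring]
    refine div_le_div_of_nonneg_right ?_ hd.le
    calc _ ≤ y ^ α * y ^ (β - α) :=
          mul_le_mul_of_nonneg_right ((aux_bound α y).trans (by linarith)) hp.le
      _ = y ^ β := by rw [← rpow_add hy]; congr 1; ring
  · have hlim : Filter.Tendsto (fun y : ℝ => y ^ (-(α - β)) / (α - β)) Filter.atTop (nhds 0) := by
      simpa using (tendsto_rpow_neg_atTop (y := α - β) (by linarith)).div_const (α - β)
    refine squeeze_zero_norm' ?_ hlim
    filter_upwards [Filter.eventually_gt_atTop 0] with y hy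
    have h0 := aux_nonneg α y hy
    have hp := rpow_pos_of_pos hy (-(α - β))
    have hd : 0 < α - β := by linarith
    simp only [Pi.mul_apply]
    rw [show β - α = -(α - β) by ring, norm_mul, norm_div, norm_neg, Real.norm_of_nonneg h0,
      Real.norm_of_nonneg hp.le, Real.norm_of_nonneg hd.le]
    have := Real.exp_pos (-y ^ α / 2)
    exact mul_le_of_le_one_left (by positivity) (by linarith)

/-- Time covariance of the fractional stochastic heat equation with Riesz-kernel noise:
for `0 < β < min(d,α)`, `0 ≤ s ≤ t` and any constant `c = c_{d,β} > 0`,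
`c ∫₀^s ∫_{ℝ^d} |ξ|^{−(d−β)} e^{−(t−u)|ξ|^α/2} e^{−(s−u)|ξ|^α/2} dξ du
  = c_{d,β,α} ((t+s)^{1−β/α} − (t−s)^{1−β/α})`,
where `c_{d,β,α} = c ∫_{ℝ^d} |ξ|^{−(d−β)−α}(1 − e^{−|ξ|^α/2}) dξ`. -/
theorem stmt_7 (d : ℕ) (hd : 1 ≤ d) (α β : ℝ) (hα0 : 0 < α) (hα2 : α ≤ 2)
    (hβ0 : 0 < β) (hβd : β < d) (hβα : β < α) (c : ℝ) (hc : 0 < c)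
    (s t : ℝ) (hs : 0 ≤ s) (hst : s ≤ t) :
    c * (∫ u in (0:ℝ)..s, ∫ ξ : EuclideanSpace ℝ (Fin d),
        ‖ξ‖ ^ (-((d:ℝ) - β)) * Real.exp (-(t - u) * ‖ξ‖ ^ α / 2)
          * Real.exp (-(s - u) * ‖ξ‖ ^ α / 2)) =
      (c * ∫ ξ : EuclideanSpace ℝ (Fin d),
          ‖ξ‖ ^ (-((d:ℝ) - β) - α) * (1 - Real.exp (-‖ξ‖ ^ α / 2)))
        * ((t + s) ^ (1 - β / α) - (t - s) ^ (1 - β / α)) := by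
  set C : ℝ := (d : ℝ) * (volume : Measure (EuclideanSpace ℝ (Fin d))).real (Metric.ball 0 1)
    with hC
  have hR : ∫ ξ : EuclideanSpace ℝ (Fin d),
      ‖ξ‖ ^ (-((d:ℝ) - β) - α) * (1 - Real.exp (-‖ξ‖ ^ α / 2)) =
      C * (α / (2 * (α - β)) * ((1/2 : ℝ) ^ (-β / α) * (1 / α) * Gamma (β / α))) := by
    rw [aux_radial d hd (fun y => y ^ (-((d:ℝ) - β) - α) * (1 - Real.exp (-y ^ α / 2))),
      ← aux_parts α β hα0 hβ0 hβα]
    congr 1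
    refine setIntegral_congr_fun measurableSet_Ioi (fun y hy => ?_)
    rw [← mul_assoc, ← rpow_add hy, mul_comm]
    congr 2
    ring
  have hL : ∀ u ∈ Set.Ioo 0 s, (∫ ξ : EuclideanSpace ℝ (Fin d),
        ‖ξ‖ ^ (-((d:ℝ) - β)) * Real.exp (-(t - u) * ‖ξ‖ ^ α / 2)
          * Real.exp (-(s - u) * ‖ξ‖ ^ α / 2)) =
      C * ((1/2 : ℝ) ^ (-β / α) * (1 / α) * Gamma (β / α)) * (t + s - 2 * u) ^ (-β / α) := by
    intro u hu
    have hb : 0 < t + s - 2 * u := by linarith [hu.2]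
    rw [aux_radial d hd (fun y => y ^ (-((d:ℝ) - β)) * Real.exp (-(t - u) * y ^ α / 2)
          * Real.exp (-(s - u) * y ^ α / 2))]
    have : ∫ y in Set.Ioi (0:ℝ), y ^ ((d:ℝ) - 1) *
        (y ^ (-((d:ℝ) - β)) * Real.exp (-(t - u) * y ^ α / 2)
          * Real.exp (-(s - u) * y ^ α / 2)) =
        ∫ y in Set.Ioi (0:ℝ), y ^ (β - 1) * Real.exp (-((1/2) * (t + s - 2 * u)) * y ^ α) := by
      refine setIntegral_congr_fun measurableSet_Ioi (fun y hy => ?_)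
      rw [mul_assoc, ← mul_assoc, ← rpow_add hy, ← Real.exp_add]
      congr 2 <;> ring
    rw [this, integral_rpow_mul_exp_neg_mul_rpow hα0 (by linarith) (by positivity),
      show β - 1 + 1 = β by ring, mul_rpow (by norm_num) hb.le]
    ring
  have hβα' : β / α < 1 := (div_lt_one hα0).2 hβα
  rw [hR, intervalIntegral.integral_congr_Ioo_of_le hs hL, intervalIntegral.integral_const_mul,
    intervalIntegral.integral_comp_sub_mul (fun x => x ^ (-β / α)) two_ne_zero (t + s),
    integral_rpow (Or.inl (by rw [neg_div]; linarith)),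
    show -β / α + 1 = 1 - β / α by ring, show t + s - 2 * s = t - s by ring,
    show t + s - 2 * 0 = t + s by ring, smul_eq_mul,
    show α / (2 * (α - β)) = 2⁻¹ / (1 - β / α) by
      have : α - β ≠ 0 := by linarith
      have : 1 - β / α ≠ 0 := by linarith
      field_simp]
  ring
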